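/- Let R ∈ ℚ[a] be multihomogeneous of multidegree (δ₁,…,δ_m) with (δ₁,…,δ_m) ≠ 0, and suppose there exists a multiindex γ₀ ∈ ℕⁿ such that R satisfies Bézout(γ₀). Then, setting q := n·(Σ_{i=1}^m δ_i d_i) − n + 1, the property Bézout(γ) holds for every γ ∈ ℕⁿ with |γ| = q. In particular, R is an inertia form of degree zero. -/

import Mathlib

open MvPolynomial

/-- Variables of the big polynomial ring `ℚ[a, x]`. -/
abbrev Var (m n : ℕ) := (Fin m × (Fin n → ℕ)) ⊕ Fin n

/-- The generic form `Fᵢ = Σ_{|α| = dᵢ} a_{i,α} x^α`. -/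
noncomputable def genForm (m n : ℕ) (d : Fin m → ℕ) (i : Fin m) :
    MvPolynomial (Var m n) ℚ :=
  ∑ α ∈ Finset.Nat.antidiagonalTuple n (d i),
    X (Sum.inl (i, α)) * ∏ j, (X (Sum.inr j)) ^ α j

/-- The monomial `x^γ` in `ℚ[a, x]`. -/
noncomputable def xPow (m n : ℕ) (γ : Fin n → ℕ) : MvPolynomial (Var m n) ℚ :=
  ∏ j, (X (Sum.inr j) : MvPolynomial (Var m n) ℚ) ^ γ j

/-- `R` satisfies Bézout(γ) if `x^γ · R` lies in the ideal generated by `F₁, …, F_m`. -/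
def Bezout (m n : ℕ) (d : Fin m → ℕ)
    (R : MvPolynomial (Fin m × (Fin n → ℕ)) ℚ) (γ : Fin n → ℕ) : Prop :=
  xPow m n γ * rename Sum.inl R ∈ Ideal.span (Set.range (genForm m n d))

/-- `R` is an inertia form of degree zero: there exists `q` such that Bézout(γ)
holds for every `γ` with `|γ| = q`. -/
def IsIFDZ (m n : ℕ) (d : Fin m → ℕ)
    (R : MvPolynomial (Fin m × (Fin n → ℕ)) ℚ) : Prop :=
  ∃ q : ℕ, ∀ γ : Fin n → ℕ, ∑ j, γ j = q → Bezout m n d R γ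

/-- `R` is multihomogeneous of multidegree `δ`. -/
def MultiHom (m n : ℕ) (d : Fin m → ℕ) (δ : Fin m → ℕ)
    (R : MvPolynomial (Fin m × (Fin n → ℕ)) ℚ) : Prop :=
  ∀ A ∈ R.support,
    (∀ i α, A (i, α) ≠ 0 → ∑ j, α j = d i) ∧
    (∀ i, (∑ p ∈ A.support, if p.1 = i then A p else 0) = δ i)

/-!
Fix `j`. The substitution sending the coefficient `a_{i,α}` of `Fᵢ` to `x_j^{dᵢ} a_{i,α}`,
corrected by `-Fᵢ` for the pure power `x^α = x_j^{dᵢ}`, fixes the `x` variables and kills every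
`Fᵢ`. It therefore kills `x^γ₀ R`, and hence `R`, because `x^γ₀` is regular. Modulo the ideal of
the `Fᵢ` it is the rescaling `a_{i,α} ↦ x_j^{dᵢ} a_{i,α}`, which multiplies `R` by `x_j^N`, where
`N = Σᵢ δᵢ dᵢ` is the degree of `R` when `a_{i,α}` has weight `dᵢ`. Thus `x_j^N R` lies in the
ideal for each `j`, and a monomial `x^γ` with `|γ| > n (N - 1)` is divisible by some `x_j^N`.
-/

lemma aeval_sub_aeval_mem {k σ B : Type*} [CommSemiring k] [CommRing B] [Algebra k B]
    {I : Ideal B} {f g : σ → B} (h : ∀ s, f s - g s ∈ I) (P : MvPolynomial σ k) :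
    aeval f P - aeval g P ∈ I := by
  have hfg : (Ideal.Quotient.mkₐ k I).comp (aeval f) =
      (Ideal.Quotient.mkₐ k I).comp (aeval g) := by
    ext s
    simpa using (Ideal.Quotient.mk_eq_mk_iff_sub_mem _ _).2 (h s)
  exact (Ideal.Quotient.mk_eq_mk_iff_sub_mem _ _).1 (DFunLike.congr_fun hfg P)

lemma aeval_pow_mul_of_isWeightedHomogeneous {k σ B : Type*} [CommSemiring k] [CommSemiring B]
    [Algebra k B] {w : σ → ℕ} {N : ℕ} {P : MvPolynomial σ k} (hP : P.IsWeightedHomogeneous w N)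
    (c : B) (f : σ → B) : aeval (fun s => c ^ w s * f s) P = c ^ N * aeval f P := by
  rw [aeval_def, aeval_def, eval₂_eq, eval₂_eq, Finset.mul_sum]
  refine Finset.sum_congr rfl fun A hA => ?_
  have hN : ∑ s ∈ A.support, w s * A s = N := by
    simpa [Finsupp.weight_apply, Finsupp.sum, mul_comm] using hP (mem_support_iff.1 hA)
  simp only [mul_pow, Finset.prod_mul_distrib, ← pow_mul, Finset.prod_pow_eq_pow_sum, hN]
  ring

lemma exists_le_of_card_mul_sub_card_lt_sum {τ : Type*} [Fintype τ] {γ : τ → ℕ} {N : ℕ}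
    (h : Fintype.card τ * N - Fintype.card τ < ∑ j, γ j) : ∃ j, N ≤ γ j := by
  have hsum : ∑ _j : τ, (N - 1) < ∑ j, γ j := by simpa [Nat.mul_sub_one] using h
  obtain ⟨j, -, hj⟩ := Finset.exists_lt_of_sum_lt hsum
  exact ⟨j, Nat.le_of_pred_lt hj⟩

lemma single_mem_antidiagonalTuple {n : ℕ} (e : ℕ) (j : Fin n) :
    Pi.single j e ∈ Finset.Nat.antidiagonalTuple n e := by
  simp [Finset.Nat.mem_antidiagonalTuple]

lemma MultiHom.isWeightedHomogeneous {m n : ℕ} {d δ : Fin m → ℕ}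
    {R : MvPolynomial (Fin m × (Fin n → ℕ)) ℚ} (hR : MultiHom m n d δ R) :
    R.IsWeightedHomogeneous (fun p => d p.1) (∑ i, δ i * d i) := by
  intro A hA
  simp only [Finsupp.weight_apply, Finsupp.sum, smul_eq_mul,
    ← (hR A (mem_support_iff.2 hA)).2, Finset.sum_mul, ite_mul, zero_mul]
  rw [Finset.sum_comm]
  simp

section Monomials

variable {k ι τ : Type*} [CommSemiring k] [Fintype τ]

/-- The monomial `x^γ` in `k[a, x]`, where the `x` variables form the right summand of the index
type; over `ℚ` it is `xPow`. -/
noncomputable def xMonomial (γ : τ → ℕ) : MvPolynomial (ι ⊕ τ) k :=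
  ∏ j, X (Sum.inr j) ^ γ j

lemma xMonomial_single [DecidableEq τ] (j : τ) (e : ℕ) :
    (xMonomial (Pi.single j e) : MvPolynomial (ι ⊕ τ) k) = X (Sum.inr j) ^ e := by
  rw [xMonomial, Finset.prod_eq_single j] <;> simp +contextual

lemma isRegular_xMonomial (γ : τ → ℕ) : IsRegular (xMonomial γ : MvPolynomial (ι ⊕ τ) k) :=
  IsRegular.prod fun j _ => isRegular_X_pow (γ j)

lemma X_pow_dvd_xMonomial {γ : τ → ℕ} {j : τ} {e : ℕ} (h : e ≤ γ j) :
    (X (Sum.inr j) ^ e : MvPolynomial (ι ⊕ τ) k) ∣ xMonomial γ :=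
  (pow_dvd_pow _ h).trans (Finset.dvd_prod_of_mem _ (Finset.mem_univ j))

end Monomials

section GenericPolynomials

variable {k ι τ : Type*} [CommRing k] [Fintype τ]

/-- The generic polynomial `Gᵢ = Σ_{α ∈ S i} a_{i,α} x^α` with prescribed support `S i`; the generic
form `genForm` is the case where `S i` consists of all exponents of degree `dᵢ`. -/
noncomputable def genericPoly (k : Type*) [CommRing k] (S : ι → Finset (τ → ℕ)) (i : ι) :
    MvPolynomial ((ι × (τ → ℕ)) ⊕ τ) k :=
  ∑ α ∈ S i, X (Sum.inl (i, α)) * xMonomial α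

/-- The ideal of `k[a, x]` generated by the generic polynomials with supports `S i`. -/
noncomputable def genericIdeal (k : Type*) [CommRing k] (S : ι → Finset (τ → ℕ)) :
    Ideal (MvPolynomial ((ι × (τ → ℕ)) ⊕ τ) k) :=
  Ideal.span (Set.range (genericPoly k S))

/-- The value of the coefficient variable `a_{i,α}` under the substitution that kills all generic
polynomials: `x^{β i} a_{i,α}`, corrected by `-Gᵢ` when `α` is the chosen exponent `β i`. -/
noncomputable def killingCoeff (k : Type*) [CommRing k] (S : ι → Finset (τ → ℕ)) (β : ι → τ → ℕ)
    (p : ι × (τ → ℕ)) : MvPolynomial ((ι × (τ → ℕ)) ⊕ τ) k :=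
  xMonomial (β p.1) * X (Sum.inl p) - if p.2 = β p.1 then genericPoly k S p.1 else 0

/-- The substitution sending `a_{i,α}` to `killingCoeff` and fixing the `x` variables. -/
noncomputable def killingHom (k : Type*) [CommRing k] (S : ι → Finset (τ → ℕ)) (β : ι → τ → ℕ) :
    MvPolynomial ((ι × (τ → ℕ)) ⊕ τ) k →ₐ[k] MvPolynomial ((ι × (τ → ℕ)) ⊕ τ) k :=
  aeval (Sum.elim (killingCoeff k S β) fun j => X (Sum.inr j))

variable {S : ι → Finset (τ → ℕ)} {β : ι → τ → ℕ}

lemma killingHom_xMonomial (γ : τ → ℕ) : killingHom k S β (xMonomial γ) = xMonomial γ := by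
  simp [killingHom, xMonomial]

lemma killingHom_rename_inl (R : MvPolynomial (ι × (τ → ℕ)) k) :
    killingHom k S β (rename Sum.inl R) = aeval (killingCoeff k S β) R := by
  rw [killingHom, aeval_rename, Sum.elim_comp_inl]

lemma killingHom_genericPoly {i : ι} (hβ : β i ∈ S i) :
    killingHom k S β (genericPoly k S i) = 0 :=
  calc killingHom k S β (genericPoly k S i)
      = ∑ α ∈ S i, killingCoeff k S β (i, α) * xMonomial α := by
        simp only [genericPoly, map_sum, map_mul, killingHom_xMonomial]
        simp [killingHom]
    _ = xMonomial (β i) * genericPoly k S i - genericPoly k S i * xMonomial (β i) := by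
        simp only [killingCoeff, sub_mul, ite_mul, zero_mul, Finset.sum_sub_distrib,
          Finset.sum_ite_eq', if_pos hβ, mul_assoc, ← Finset.mul_sum]
        rw [← genericPoly]
    _ = 0 := by ring

lemma genericIdeal_le_ker_killingHom (hβ : ∀ i, β i ∈ S i) :
    genericIdeal k S ≤ RingHom.ker (killingHom k S β) := by
  rw [genericIdeal, Ideal.span_le]
  rintro _ ⟨i, rfl⟩
  exact killingHom_genericPoly (hβ i)

lemma aeval_killingCoeff_eq_zero (hβ : ∀ i, β i ∈ S i) {R : MvPolynomial (ι × (τ → ℕ)) k}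
    {γ : τ → ℕ} (h : xMonomial γ * rename Sum.inl R ∈ genericIdeal k S) :
    aeval (killingCoeff k S β) R = 0 := by
  have hker : killingHom k S β (xMonomial γ * rename Sum.inl R) = 0 :=
    genericIdeal_le_ker_killingHom hβ h
  rwa [map_mul, killingHom_xMonomial, killingHom_rename_inl,
    (isRegular_xMonomial γ).left.mul_left_eq_zero_iff] at hker

lemma aeval_xMonomial_mul_X_mem_genericIdeal (hβ : ∀ i, β i ∈ S i)
    {R : MvPolynomial (ι × (τ → ℕ)) k} {γ : τ → ℕ}
    (h : xMonomial γ * rename Sum.inl R ∈ genericIdeal k S) :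
    aeval (fun p => xMonomial (β p.1) * X (Sum.inl p)) R ∈ genericIdeal k S := by
  have hcongr (p : ι × (τ → ℕ)) :
      xMonomial (β p.1) * X (Sum.inl p) - killingCoeff k S β p ∈ genericIdeal k S := by
    rw [killingCoeff, sub_sub_cancel]
    split_ifs
    · exact Ideal.subset_span ⟨p.1, rfl⟩
    · exact zero_mem _
  simpa only [aeval_killingCoeff_eq_zero hβ h, sub_zero] using aeval_sub_aeval_mem hcongr R

variable [DecidableEq τ]

lemma X_pow_mul_rename_mem_genericIdeal {d : ι → ℕ} {j : τ} (hS : ∀ i, Pi.single j (d i) ∈ S i)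
    {R : MvPolynomial (ι × (τ → ℕ)) k} {N : ℕ}
    (hR : R.IsWeightedHomogeneous (fun p => d p.1) N) {γ : τ → ℕ}
    (h : xMonomial γ * rename Sum.inl R ∈ genericIdeal k S) :
    X (Sum.inr j) ^ N * rename Sum.inl R ∈ genericIdeal k S := by
  rw [rename_eq_aeval, ← aeval_pow_mul_of_isWeightedHomogeneous hR]
  simpa only [xMonomial_single, Function.comp_apply] using
    aeval_xMonomial_mul_X_mem_genericIdeal hS h

theorem bezout_all_of_bezout_general {d : ι → ℕ} (hS : ∀ i j, Pi.single j (d i) ∈ S i)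
    {R : MvPolynomial (ι × (τ → ℕ)) k} {N : ℕ}
    (hR : R.IsWeightedHomogeneous (fun p => d p.1) N)
    (hB : ∃ γ₀ : τ → ℕ, xMonomial γ₀ * rename Sum.inl R ∈ genericIdeal k S) {γ : τ → ℕ}
    (hγ : Fintype.card τ * N - Fintype.card τ + 1 ≤ ∑ j, γ j) :
    xMonomial γ * rename Sum.inl R ∈ genericIdeal k S := by
  obtain ⟨γ₀, h₀⟩ := hB
  obtain ⟨j, hj⟩ := exists_le_of_card_mul_sub_card_lt_sum hγ
  exact Ideal.mem_of_dvd _ (mul_dvd_mul_right (X_pow_dvd_xMonomial hj) _)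
    (X_pow_mul_rename_mem_genericIdeal (fun i => hS i j) hR h₀)

end GenericPolynomials

/-- If `R` is multihomogeneous of multidegree `δ ≠ 0` and satisfies
Bézout(γ₀) for some `γ₀`, then with `q = n·(Σᵢ δᵢ dᵢ) − n + 1`, Bézout(γ) holds for
every `γ` with `|γ| = q`; in particular `R` is an inertia form of degree zero. -/
theorem bezout_all_of_bezout (m n : ℕ) (hm : 1 ≤ m) (hn : 1 ≤ n)
    (d : Fin m → ℕ) (hd : ∀ i, 1 ≤ d i) (δ : Fin m → ℕ) (hδ : δ ≠ 0)
    (R : MvPolynomial (Fin m × (Fin n → ℕ)) ℚ)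
    (hMH : MultiHom m n d δ R)
    (hB : ∃ γ₀ : Fin n → ℕ, Bezout m n d R γ₀) :
    (∀ γ : Fin n → ℕ, ∑ j, γ j = n * (∑ i, δ i * d i) - n + 1 → Bezout m n d R γ) ∧
      IsIFDZ m n d R := by
  have key γ (hγ : ∑ j, γ j = n * (∑ i, δ i * d i) - n + 1) : Bezout m n d R γ :=
    bezout_all_of_bezout_general (fun i => single_mem_antidiagonalTuple (d i))
      hMH.isWeightedHomogeneous hB (by simp [hγ])
  exact ⟨key, _, key⟩
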